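/- Let N, N_cp, L, p, q be positive integers with L ≤ N and L − 1 ≤ N_cp. Let C_0, …, C_{L−1} be p×q complex matrices, and set C_k = 0 (the p×q zero matrix) for every integer k with k < 0 or k ≥ L. Let H be the block matrix with N row blocks and N + N_cp column blocks whose (i,j)-th p×q block equals C_{j−i} (0-indexed), i.e., a banded block Toeplitz matrix. Let T_cp be the cyclic-prefix insertion matrix: the block matrix with N + N_cp row blocks and N column blocks of size q×q whose (i,j)-th block equals I_q if (i < N and i = j) or (i ≥ N and j = i − N), and 0 otherwise. Then the product H · T_cp is the Np×Nq block circulant matrix whose (i,j)-th p×q block equals C_{(j−i) mod N}. -/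

import Mathlib

/-!
`T_cp` adds to column `j` of the channel matrix the column `N` places further right, whenever the
prefix has one. Block `(i, j)` of the product is therefore `C_d + C_{d+N}` with `d = j - i`. Since
`|d| < N` and the symbol lives on `[0, N)`, at most one of the two summands survives, and it is the
one at `d mod N`. Past the end of the prefix the second summand is missing, but there `d + N`
already exceeds the channel memory, so nothing is lost.
-/

open Matrix

/-- The block Toeplitz matrix with `M` row blocks, `N` column blocks and symbol `C`. The symbol is
indexed by all of `ℤ`, and block `(i, j)` is `C (j - i)`, opposite in sign to
`Matrix.circulant`. -/
def blockToeplitz {m n R : Type*} (M N : ℕ) (C : ℤ → Matrix m n R) :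
    Matrix (Fin M × m) (Fin N × n) R :=
  Matrix.comp _ _ _ _ R (Matrix.of fun i j => C ((j : ℤ) - (i : ℤ)))

/-- The block circulant matrix with `N` row and column blocks whose first block row is
`C 0, …, C (N - 1)`. Values of `C` outside `[0, N)` are ignored. -/
def blockCirculant {m n R : Type*} (N : ℕ) (C : ℤ → Matrix m n R) :
    Matrix (Fin N × m) (Fin N × n) R :=
  Matrix.comp _ _ _ _ R (Matrix.of fun i j => C (((j : ℤ) - (i : ℤ)) % (N : ℤ)))

/-- The cyclic-prefix insertion matrix `T_cp`, with identity blocks of size `n`: a block of `N`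
symbols followed by a copy of its first `Ncp` symbols. When `N < Ncp` the copy is padded with zeros
and does not wrap around again. -/
def cyclicPrefix (N Ncp : ℕ) (n R : Type*) [DecidableEq n] [Zero R] [One R] :
    Matrix (Fin (N + Ncp) × n) (Fin N × n) R :=
  Matrix.of fun x y =>
    if (x.1 : ℕ) = y.1 ∨ (x.1 : ℕ) = N + y.1 then (1 : Matrix n n R) x.2 y.2 else 0

section CyclicPrefix

variable {N Ncp : ℕ} {n R : Type*} [DecidableEq n]

theorem cyclicPrefix_castAdd_apply [Zero R] [One R] (k : Fin N) (c : n) (y : Fin N × n) :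
    cyclicPrefix N Ncp n R (Fin.castAdd Ncp k, c) y =
      (1 : Matrix (Fin N × n) (Fin N × n) R) (k, c) y := by
  have not_prefix : (k : ℕ) ≠ N + y.1 := by omega
  simp [cyclicPrefix, Matrix.one_apply, Prod.ext_iff, Fin.ext_iff, not_prefix, ite_and]

theorem cyclicPrefix_natAdd_apply [Zero R] [One R] (k : Fin Ncp) (c : n) (y : Fin N × n) :
    cyclicPrefix N Ncp n R (Fin.natAdd N k, c) y =
      if (k : ℕ) = y.1 then (1 : Matrix n n R) c y.2 else 0 := by
  have not_body : N + (k : ℕ) ≠ y.1 := by omega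
  simp [cyclicPrefix, not_body]

theorem mul_cyclicPrefix_apply {l : Type*} [Fintype n] [NonAssocSemiring R]
    (A : Matrix l (Fin (N + Ncp) × n) R) (x : l) (j : Fin N) (b : n) :
    (A * cyclicPrefix N Ncp n R) x (j, b) =
      A x (Fin.castAdd Ncp j, b) +
        if h : (j : ℕ) < Ncp then A x (Fin.natAdd N ⟨j, h⟩, b) else 0 := by
  have body_sum : ∑ k : Fin N, ∑ c, A x (Fin.castAdd Ncp k, c) *
      cyclicPrefix N Ncp n R (Fin.castAdd Ncp k, c) (j, b) = A x (Fin.castAdd Ncp j, b) := by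
    simp only [cyclicPrefix_castAdd_apply, ← Fintype.sum_prod_type']
    simp [Matrix.one_apply]
  have prefix_block (k : Fin Ncp) : ∑ c, A x (Fin.natAdd N k, c) *
      cyclicPrefix N Ncp n R (Fin.natAdd N k, c) (j, b) =
        if (k : ℕ) = j then A x (Fin.natAdd N k, b) else 0 := by
    simp only [cyclicPrefix_natAdd_apply]
    split_ifs <;> simp [Matrix.one_apply]
  rw [Matrix.mul_apply, Fintype.sum_prod_type, Fin.sum_univ_add, body_sum]
  simp only [prefix_block]
  congr 1
  split_ifs with h
  · rw [Fintype.sum_eq_single ⟨j, h⟩ fun k hk => if_neg fun hkj => hk (Fin.ext hkj), if_pos rfl]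
  · exact Fintype.sum_eq_zero _ fun k => if_neg (by omega)

end CyclicPrefix

theorem apply_add_apply_add_eq_apply_emod {M : Type*} [AddZeroClass M] {f : ℤ → M} {N d : ℤ}
    (hf : ∀ k, k < 0 ∨ N ≤ k → f k = 0) (hd : -N ≤ d) (hdN : d < N) :
    f d + f (d + N) = f (d % N) := by
  rcases le_or_gt 0 d with hd₀ | hd₀
  · rw [hf (d + N) (.inr (by omega)), add_zero, Int.emod_eq_of_lt hd₀ hdN]
  · rw [hf d (.inl hd₀), zero_add, ← Int.add_emod_right,
      Int.emod_eq_of_lt (by omega) (by omega)]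

theorem cyclic_prefix_makes_block_circulant_general {m n R : Type*} [Fintype n] [DecidableEq n]
    [NonAssocSemiring R] {N Ncp L : ℕ} (hLN : L ≤ N) (hLcp : L ≤ Ncp + 1)
    {C : ℤ → Matrix m n R} (hC : ∀ k : ℤ, k < 0 ∨ (L : ℤ) ≤ k → C k = 0) :
    blockToeplitz N (N + Ncp) C * cyclicPrefix N Ncp n R = blockCirculant N C := by
  ext ⟨i, a⟩ ⟨j, b⟩
  have wrap : C (j - i) + C (j - i + N) = C ((j - i) % N) :=
    apply_add_apply_add_eq_apply_emod (fun k hk => hC k (by omega)) (by omega) (by omega)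
  have prefix_index : ((N + j : ℕ) : ℤ) - i = j - i + N := by omega
  simp only [mul_cyclicPrefix_apply, blockToeplitz, blockCirculant, Matrix.comp_apply,
    Matrix.of_apply, Fin.val_castAdd, Fin.val_natAdd, prefix_index, ← wrap, Matrix.add_apply]
  split_ifs with hj
  · rfl
  · rw [hC (j - i + N) (by omega), Matrix.zero_apply]

/-- Cyclic-prefix insertion turns the banded block Toeplitz channel matrix into
a block circulant matrix, provided the channel memory `L − 1` does not exceed
the cyclic prefix length `N_cp`. -/
theorem cyclic_prefix_makes_block_circulant
    (N Ncp L p q : ℕ) (hN : 0 < N) (hNcp : 0 < Ncp) (hL : 0 < L)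
    (hp : 0 < p) (hq : 0 < q)
    (hLN : L ≤ N) (hLcp : L - 1 ≤ Ncp)
    (C : ℤ → Matrix (Fin p) (Fin q) ℂ)
    (hCsupp : ∀ k : ℤ, (k < 0 ∨ (L : ℤ) ≤ k) → C k = 0)
    (H : Matrix (Fin N × Fin p) (Fin (N + Ncp) × Fin q) ℂ)
    (hH : ∀ (i : Fin N) (j : Fin (N + Ncp)) (a : Fin p) (b : Fin q),
      H (i, a) (j, b) = C ((j : ℤ) - (i : ℤ)) a b)
    (Tcp : Matrix (Fin (N + Ncp) × Fin q) (Fin N × Fin q) ℂ)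
    (hTcp : ∀ (i : Fin (N + Ncp)) (j : Fin N) (a b : Fin q),
      Tcp (i, a) (j, b) =
        if ((i : ℕ) < N ∧ (i : ℕ) = (j : ℕ)) ∨ (N ≤ (i : ℕ) ∧ (j : ℕ) = (i : ℕ) - N)
        then (1 : Matrix (Fin q) (Fin q) ℂ) a b else 0) :
    ∀ (i j : Fin N) (a : Fin p) (b : Fin q),
      (H * Tcp) (i, a) (j, b) = C (((j : ℤ) - (i : ℤ)) % (N : ℤ)) a b := by
  obtain rfl : H = blockToeplitz N (N + Ncp) C := Matrix.ext fun _ _ => hH _ _ _ _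
  obtain rfl : Tcp = cyclicPrefix N Ncp (Fin q) ℂ :=
    Matrix.ext fun _ _ => (hTcp _ _ _ _).trans (if_congr (by omega) rfl rfl)
  exact fun i j a b =>
    congr_fun₂ (cyclic_prefix_makes_block_circulant_general hLN (by omega) hCsupp) (i, a) (j, b)
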